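/- arXiv:1108.3223 — 4 statements merged into one kernel-verified Lean document; each statement's English description precedes it below -/
import Mathlib

section
/- Consider one step of the randomized optimal-consensus update. Suppose the intersection X₀ = ⋂_{i=1}^n X_i is nonempty. If x : {1,…,n} → E and x' : {1,…,n} → E are such that for each i, either x' i = P_{X_i}(x i), or x' i = ∑_{j=1}^n a_{ij} x_j for some weights a_{ij} ≥ 0 with ∑_{j=1}^n a_{ij} = 1, then max_{i=1,…,n} dist(x' i, X₀) ≤ max_{i=1,…,n} dist(x i, X₀). -/
/-!
The intersection of the constraint sets is convex, so the distance to it is a convex function, and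
by the maximum principle its value at an average of the states is at most its value at one of them.
A projection onto `X i` does not increase the distance to any point of `X i`, because the angle at
the projected point is not acute; in particular this holds for every point of the intersection.
-/

open Metric Set

theorem infDist_le_infDist_of_forall_dist_le {α : Type*} [PseudoMetricSpace α] {s : Set α}
    {x y : α} (hs : s.Nonempty) (h : ∀ z ∈ s, dist x z ≤ dist y z) :
    infDist x s ≤ infDist y s :=
  (le_infDist hs).2 fun z hz => (infDist_le_dist_of_mem hz).trans (h z hz)

theorem convexOn_infDist {E : Type*} [SeminormedAddCommGroup E] [NormedSpace ℝ E] {s : Set E}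
    (hs : Convex ℝ s) (hne : s.Nonempty) : ConvexOn ℝ univ (infDist · s) := by
  refine ⟨convex_univ, fun x _ y _ a b ha hb hab => le_of_forall_pos_le_add fun ε hε => ?_⟩
  obtain ⟨u, hu, hxu⟩ := (infDist_lt_iff hne).1 (lt_add_of_pos_right (infDist x s) hε)
  obtain ⟨v, hv, hyv⟩ := (infDist_lt_iff hne).1 (lt_add_of_pos_right (infDist y s) hε)
  calc infDist (a • x + b • y) s
      ≤ dist (a • x + b • y) (a • u + b • v) := infDist_le_dist_of_mem (hs hu hv ha hb hab)
    _ ≤ dist (a • x) (a • u) + dist (b • y) (b • v) := dist_add_add_le _ _ _ _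
    _ = a * dist x u + b * dist y v := by
      rw [dist_smul₀, dist_smul₀, Real.norm_of_nonneg ha, Real.norm_of_nonneg hb]
    _ ≤ a * (infDist x s + ε) + b * (infDist y s + ε) := by gcongr
    _ = a • infDist x s + b • infDist y s + ε := by
      simp only [smul_eq_mul]
      linear_combination ε * hab

/-- `p` is a point of `K` nearest to `y`. In a Hilbert space, for `K` nonempty, closed and convex,
this says that `p` is the metric projection `P_K(y)`; as a relation it needs no existence or
uniqueness of nearest points. -/
structure IsNearestPoint {α : Type*} [PseudoMetricSpace α] (K : Set α) (y p : α) : Prop where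
  mem : p ∈ K
  dist_le : ∀ z ∈ K, dist y p ≤ dist y z

theorem isNearestPoint_iff_norm_sub_le {E : Type*} [SeminormedAddCommGroup E] {K : Set E}
    {y p : E} : IsNearestPoint K y p ↔ p ∈ K ∧ ∀ z ∈ K, ‖y - p‖ ≤ ‖y - z‖ := by
  simp only [← dist_eq_norm]
  exact ⟨fun h => ⟨h.mem, h.dist_le⟩, fun h => ⟨h.1, h.2⟩⟩

namespace IsNearestPoint

theorem dist_eq_infDist {α : Type*} [PseudoMetricSpace α] {K : Set α} {y p : α}
    (hp : IsNearestPoint K y p) : dist y p = infDist y K :=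
  le_antisymm ((le_infDist ⟨p, hp.mem⟩).2 hp.dist_le) (infDist_le_dist_of_mem hp.mem)

variable {E : Type*} [NormedAddCommGroup E] [InnerProductSpace ℝ E] {K : Set E} {y p z : E}

theorem real_inner_le_zero (hp : IsNearestPoint K y p) (hK : Convex ℝ K) (hz : z ∈ K) :
    inner ℝ (y - p) (z - p) ≤ 0 := by
  have norm_eq : ‖y - p‖ = ⨅ w : K, ‖y - w‖ := by
    simpa only [infDist_eq_iInf, dist_eq_norm] using hp.dist_eq_infDist
  exact (norm_eq_iInf_iff_real_inner_le_zero hK hp.mem).1 norm_eq z hz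

theorem dist_sq_add_dist_sq_le (hp : IsNearestPoint K y p) (hK : Convex ℝ K) (hz : z ∈ K) :
    dist y p ^ 2 + dist p z ^ 2 ≤ dist y z ^ 2 := by
  have expand : ‖y - z‖ ^ 2 = ‖y - p‖ ^ 2 - 2 * inner ℝ (y - p) (z - p) + ‖z - p‖ ^ 2 := by
    rw [← sub_sub_sub_cancel_right y z p, norm_sub_sq_real]
  rw [dist_eq_norm, dist_eq_norm', dist_eq_norm, expand]
  linarith [hp.real_inner_le_zero hK hz]

theorem dist_le_dist (hp : IsNearestPoint K y p) (hK : Convex ℝ K) (hz : z ∈ K) :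
    dist p z ≤ dist y z :=
  le_of_sq_le_sq
    ((le_add_of_nonneg_left (sq_nonneg _)).trans (hp.dist_sq_add_dist_sq_le hK hz)) dist_nonneg

theorem infDist_le_infDist {s : Set E} (hp : IsNearestPoint K y p) (hK : Convex ℝ K) (hsK : s ⊆ K)
    (hs : s.Nonempty) : infDist p s ≤ infDist y s :=
  infDist_le_infDist_of_forall_dist_le hs fun _ hz => hp.dist_le_dist hK (hsK hz)

end IsNearestPoint

theorem stmt2_general {E : Type*} [NormedAddCommGroup E] [InnerProductSpace ℝ E] {ι : Type*}
    {X : ι → Set E} (hXconv : ∀ i, Convex ℝ (X i)) (hXne : (⋂ j, X j).Nonempty) {x x' : ι → E}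
    (hbdd : BddAbove (range fun i => infDist (x i) (⋂ j, X j)))
    (hstep : ∀ i, IsNearestPoint (X i) (x i) (x' i) ∨ x' i ∈ convexHull ℝ (range x)) :
    (⨆ i, infDist (x' i) (⋂ j, X j)) ≤ ⨆ i, infDist (x i) (⋂ j, X j) := by
  refine Real.iSup_le (fun i => ?_) (Real.iSup_nonneg fun _ => infDist_nonneg)
  suffices ∃ k, infDist (x' i) (⋂ j, X j) ≤ infDist (x k) (⋂ j, X j) from
    this.elim fun k hk => hk.trans (le_ciSup hbdd k)
  rcases hstep i with hproj | havg
  · exact ⟨i, hproj.infDist_le_infDist (hXconv i) (iInter_subset X i) hXne⟩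
  · have convex_dist := convexOn_infDist (convex_iInter hXconv) hXne
    obtain ⟨_, ⟨k, rfl⟩, hk⟩ := convex_dist.exists_ge_of_mem_convexHull (subset_univ _) havg
    exact ⟨k, hk⟩

/-- One step of the randomized optimal-consensus update does not increase
the maximal distance to the intersection `X₀ = ⋂ i, X i`. -/
theorem stmt2 {E : Type*} [NormedAddCommGroup E] [InnerProductSpace ℝ E] [CompleteSpace E]
    {n : ℕ} (hn : 1 ≤ n)
    (X : Fin n → Set E) (hXne : ∀ i, (X i).Nonempty) (hXc : ∀ i, IsClosed (X i))
    (hXconv : ∀ i, Convex ℝ (X i))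
    (X₀ : Set E) (hX₀ : X₀ = ⋂ i, X i) (hX₀ne : X₀.Nonempty)
    (P : Fin n → E → E)
    (hP : ∀ i y, P i y ∈ X i ∧ ∀ z ∈ X i, ‖y - P i y‖ ≤ ‖y - z‖)
    (x x' : Fin n → E)
    (hstep : ∀ i, x' i = P i (x i) ∨
      ∃ a : Fin n → ℝ, (∀ j, 0 ≤ a j) ∧ (∑ j, a j = 1) ∧ x' i = ∑ j, a j • x j) :
    (⨆ i, Metric.infDist (x' i) X₀) ≤ ⨆ i, Metric.infDist (x i) X₀ := by
  subst hX₀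
  refine stmt2_general hXconv hX₀ne (finite_range _).bddAbove fun i => (hstep i).imp ?_ ?_
  · exact fun h => h ▸ isNearestPoint_iff_norm_sub_le.2 (hP i (x i))
  · exact fun ⟨a, ha, hsum, h⟩ =>
      mem_convexHull_of_exists_fintype a x ha hsum mem_range_self h.symm
end

section
/- Consider one step of the randomized optimal-consensus update, and fix an index α₀ ∈ {1,…,n}. If x : {1,…,n} → E and x' : {1,…,n} → E are such that for each i, either x' i = P_{X_i}(x i), or x' i = ∑_{j=1}^n a_{ij} x_j for some weights a_{ij} ≥ 0 with ∑_{j=1}^n a_{ij} = 1, then max_{i=1,…,n} dist(x' i, X_{α₀}) ≤ max_{i=1,…,n} dist(x i, X_{α₀}) + max_{i=1,…,n} dist(x i, X_i). -/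
/-!
The function `dist(·, K)` is convex when `K` is convex, so averaging cannot push an agent farther
from `K` than the farthest agent already was. It is also `1`-Lipschitz, and projecting `y` onto `s`
moves `y` by exactly `dist(y, s)`, so a projection step costs at most that much extra.
-/

open Metric Set

section NearestPoint

variable {α : Type*} [PseudoMetricSpace α] {s : Set α} {y p : α}

theorem dist_eq_infDist_of_isMinOn (hp : p ∈ s) (hmin : IsMinOn (dist y) s p) :
    dist y p = infDist y s :=
  le_antisymm ((le_infDist ⟨p, hp⟩).2 fun _ hz => hmin hz) (infDist_le_dist_of_mem hp)

theorem infDist_le_infDist_add_infDist_of_isMinOn (hp : p ∈ s) (hmin : IsMinOn (dist y) s p)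
    (K : Set α) : infDist p K ≤ infDist y K + infDist y s :=
  calc
    infDist p K ≤ infDist y K + dist p y := infDist_le_infDist_add_dist
    _ = infDist y K + infDist y s := by rw [dist_comm, dist_eq_infDist_of_isMinOn hp hmin]

end NearestPoint

theorem sum_smul_mem_closedConvexHull_range {ι 𝕜 E : Type*} [Fintype ι] [Field 𝕜] [LinearOrder 𝕜]
    [IsStrictOrderedRing 𝕜] [AddCommGroup E] [Module 𝕜 E] [TopologicalSpace E] {a : ι → 𝕜}
    (ha : ∀ j, 0 ≤ a j) (hsum : ∑ j, a j = 1) (x : ι → E) :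
    ∑ j, a j • x j ∈ closedConvexHull 𝕜 (range x) :=
  convex_closedConvexHull.sum_mem (fun j _ => ha j) hsum fun j _ =>
    subset_closedConvexHull (mem_range_self j)

section ConvexTarget

variable {E : Type*} [SeminormedAddCommGroup E] [NormedSpace ℝ E] {K : Set E}

theorem convexOn_infDist_s3 (hK : Convex ℝ K) (hKne : K.Nonempty) :
    ConvexOn ℝ univ fun y => infDist y K := by
  refine ⟨convex_univ, fun x _ y _ a b ha hb hab => le_of_forall_pos_le_add fun ε hε => ?_⟩
  obtain ⟨p, hpK, hp⟩ := (infDist_lt_iff hKne).1 (lt_add_of_pos_right (infDist x K) hε)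
  obtain ⟨q, hqK, hq⟩ := (infDist_lt_iff hKne).1 (lt_add_of_pos_right (infDist y K) hε)
  calc
    infDist (a • x + b • y) K ≤ dist (a • x + b • y) (a • p + b • q) :=
      infDist_le_dist_of_mem (hK hpK hqK ha hb hab)
    _ ≤ dist (a • x) (a • p) + dist (b • y) (b • q) := dist_add_add_le _ _ _ _
    _ = a * dist x p + b * dist y q := by
      rw [dist_smul₀, dist_smul₀, Real.norm_of_nonneg ha, Real.norm_of_nonneg hb]
    _ ≤ a * (infDist x K + ε) + b * (infDist y K + ε) := by gcongr
    _ = a • infDist x K + b • infDist y K + ε := by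
      simp only [smul_eq_mul]
      linear_combination ε * hab

theorem infDist_le_of_mem_closedConvexHull (hK : Convex ℝ K) (hKne : K.Nonempty) {S : Set E}
    {r : ℝ} (hS : ∀ y ∈ S, infDist y K ≤ r) {x : E} (hx : x ∈ closedConvexHull ℝ S) :
    infDist x K ≤ r := by
  have sublevel_convex : Convex ℝ {y | infDist y K ≤ r} := by
    simpa only [mem_univ, true_and] using (convexOn_infDist_s3 hK hKne).convex_le r
  have sublevel_closed : IsClosed {y | infDist y K ≤ r} :=
    isClosed_le (continuous_infDist_pt K) continuous_const
  exact closedConvexHull_min hS sublevel_convex sublevel_closed hx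

theorem stmt3_general {ι : Type*} [Nonempty ι] (hK : Convex ℝ K) (hKne : K.Nonempty)
    {X : ι → Set E} {x x' : ι → E}
    (hbddK : BddAbove (range fun i => infDist (x i) K))
    (hbddX : BddAbove (range fun i => infDist (x i) (X i)))
    (hstep : ∀ i, (x' i ∈ X i ∧ IsMinOn (dist (x i)) (X i) (x' i)) ∨
      x' i ∈ closedConvexHull ℝ (range x)) :
    (⨆ i, infDist (x' i) K) ≤ (⨆ i, infDist (x i) K) + ⨆ i, infDist (x i) (X i) := by
  refine ciSup_le fun i => ?_
  rcases hstep i with ⟨hmem, hmin⟩ | haverage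
  · exact (infDist_le_infDist_add_infDist_of_isMinOn hmem hmin K).trans
      (add_le_add (le_ciSup hbddK i) (le_ciSup hbddX i))
  · have le_sup : infDist (x' i) K ≤ ⨆ j, infDist (x j) K :=
      infDist_le_of_mem_closedConvexHull hK hKne (forall_mem_range.2 (le_ciSup hbddK)) haverage
    exact le_add_of_le_of_nonneg le_sup (Real.iSup_nonneg fun _ => infDist_nonneg)

end ConvexTarget

/-- One step of the randomized optimal-consensus update satisfies
`max_i dist(x' i, X α₀) ≤ max_i dist(x i, X α₀) + max_i dist(x i, X i)`. -/
theorem stmt3 {E : Type*} [NormedAddCommGroup E] [InnerProductSpace ℝ E] [CompleteSpace E]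
    {n : ℕ} (hn : 1 ≤ n) (α₀ : Fin n)
    (X : Fin n → Set E) (hXne : ∀ i, (X i).Nonempty) (hXc : ∀ i, IsClosed (X i))
    (hXconv : ∀ i, Convex ℝ (X i))
    (P : Fin n → E → E)
    (hP : ∀ i y, P i y ∈ X i ∧ ∀ z ∈ X i, ‖y - P i y‖ ≤ ‖y - z‖)
    (x x' : Fin n → E)
    (hstep : ∀ i, x' i = P i (x i) ∨
      ∃ a : Fin n → ℝ, (∀ j, 0 ≤ a j) ∧ (∑ j, a j = 1) ∧ x' i = ∑ j, a j • x j) :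
    (⨆ i, Metric.infDist (x' i) (X α₀))
      ≤ (⨆ i, Metric.infDist (x i) (X α₀)) + ⨆ i, Metric.infDist (x i) (X i) := by
  have : Nonempty (Fin n) := ⟨α₀⟩
  exact stmt3_general (hXconv α₀) (hXne α₀) (finite_range _).bddAbove (finite_range _).bddAbove
    fun i => (hstep i).imp
      (fun hproj => by simpa only [hproj, isMinOn_iff, dist_eq_norm] using hP i (x i))
      fun ⟨_, ha, hsum, haverage⟩ => haverage ▸ sum_smul_mem_closedConvexHull_range ha hsum x
end

section
/- Let E be a real Hilbert space, for each i ∈ {1,…,n} let X_i ⊆ E be a nonempty closed convex set, and suppose X₀ = ⋂_{i=1}^n X_i is nonempty. Let Γ denote the set of all finite compositions P_{X_{i_k}} ∘ ⋯ ∘ P_{X_{i_1}} of the metric projections onto the sets X_i (including the identity map as the empty composition). Let Y ⊆ E be a nonempty finite set, and let Δ_Y be the convex hull of { P(y) : y ∈ Y, P ∈ Γ }. Then for every w ∈ Δ_Y, dist(w, conv(Y)) ≤ 2 · max_{z ∈ Y} dist(z, X₀), where conv(Y) is the convex hull of Y. -/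
/-! By the obtuse-angle criterion, a projection onto a convex set `K` moves no point away from any
point of `K`. A composition `T` of the projections onto the `X i` therefore moves no point away from
any `z ∈ ⋂ i, X i`, so `dist (T y) y ≤ dist (T y) z + dist y z ≤ 2 * dist y z`. Taking the infimum
over `z` puts every `T y` with `y ∈ Y` in a closed thickening of `conv Y`; such a thickening is
convex, so it contains the convex hull of these points as well. -/

open Metric
open scoped RealInnerProductSpace

section QuasiNonexpansive

variable {ι α : Type*} [PseudoMetricSpace α] {S T : Set α} {f : α → α}

/-- `f` is quasi-nonexpansive with respect to `S`: it does not increase the distance to any point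
of `S`. Unlike in the usual definition, `S` is an arbitrary set rather than the fixed
point set of `f`, so that one set can serve all the members of a family of maps. -/
def IsQuasiNonexpansive (S : Set α) (f : α → α) : Prop :=
  ∀ y, ∀ z ∈ S, dist (f y) z ≤ dist y z

theorem IsQuasiNonexpansive.anti (hf : IsQuasiNonexpansive T f) (hST : S ⊆ T) :
    IsQuasiNonexpansive S f :=
  fun y z hz => hf y z (hST hz)

theorem IsQuasiNonexpansive.foldl {f : ι → α → α} (hf : ∀ i, IsQuasiNonexpansive S (f i))
    (L : List ι) : IsQuasiNonexpansive S (L.foldl fun v i => f i v) :=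
  fun _ z hz => L.foldlRecOn (motive := fun v => dist v z ≤ _) _ le_rfl
    fun v hv i _ => (hf i v z hz).trans hv

theorem IsQuasiNonexpansive.dist_self_le (hf : IsQuasiNonexpansive S f) (hS : S.Nonempty) (y : α) :
    dist (f y) y ≤ 2 * infDist y S := by
  suffices dist (f y) y / 2 ≤ infDist y S by linarith
  refine (le_infDist hS).2 fun z hz => ?_
  linarith [dist_triangle_right (f y) y z, hf y z hz]

end QuasiNonexpansive

/-- The points obtained from points of `Y` by applying finitely many maps of the family `f`, with
repetitions allowed. A composition is encoded by the list of its indices in the order of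
application, the empty list giving the identity. -/
def compositionOrbit {ι α : Type*} (f : ι → α → α) (Y : Set α) : Set α :=
  {w | ∃ y ∈ Y, ∃ L : List ι, w = L.foldl (fun v i => f i v) y}

section ConvexHull

variable {ι E : Type*} [SeminormedAddCommGroup E] [NormedSpace ℝ E] {S C Y : Set E} {r : ℝ} {w : E}

theorem infDist_le_of_mem_convexHull (hC : Convex ℝ C) (hS : ∀ x ∈ S, ∃ y ∈ C, dist x y ≤ r)
    (hw : w ∈ convexHull ℝ S) : infDist w C ≤ r := by
  have hr : 0 ≤ r := by
    obtain ⟨x, hx⟩ := convexHull_nonempty_iff.1 ⟨w, hw⟩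
    obtain ⟨y, -, hxy⟩ := hS x hx
    exact dist_nonneg.trans hxy
  have hSC : S ⊆ cthickening r C := fun x hx =>
    let ⟨y, hy, hxy⟩ := hS x hx
    mem_cthickening_of_dist_le x y r C hy hxy
  exact ENNReal.toReal_le_of_le_ofReal hr (convexHull_min hSC (hC.cthickening r) hw)

theorem infDist_le_of_mem_convexHull_compositionOrbit {f : ι → E → E}
    (hf : ∀ i, IsQuasiNonexpansive S (f i)) (hS : S.Nonempty) (hY : ∀ y ∈ Y, infDist y S ≤ r)
    (hw : w ∈ convexHull ℝ (compositionOrbit f Y)) : infDist w (convexHull ℝ Y) ≤ 2 * r := by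
  refine infDist_le_of_mem_convexHull (convex_convexHull ℝ Y) ?_ hw
  rintro _ ⟨y, hy, L, rfl⟩
  refine ⟨y, subset_convexHull ℝ Y hy, ?_⟩
  calc dist (L.foldl (fun v i => f i v) y) y
      ≤ 2 * infDist y S := (IsQuasiNonexpansive.foldl hf L).dist_self_le hS y
    _ ≤ 2 * r := by gcongr; exact hY y hy

end ConvexHull

/-- `p` is a metric projection onto `K`: it sends each point to a nearest point of `K`. As nearest
points may fail to exist or to be unique, this is a property of `p` and not a function of `K`. -/
def IsMetricProjection {E : Type*} [SeminormedAddCommGroup E] (K : Set E) (p : E → E) : Prop :=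
  ∀ y, p y ∈ K ∧ ∀ z ∈ K, ‖y - p y‖ ≤ ‖y - z‖

section MetricProjection

variable {E : Type*} [NormedAddCommGroup E] [InnerProductSpace ℝ E] {K : Set E} {p : E → E}

theorem IsMetricProjection.real_inner_le_zero (hp : IsMetricProjection K p) (hK : Convex ℝ K)
    (y : E) {z : E} (hz : z ∈ K) : ⟪y - p y, z - p y⟫ ≤ 0 := by
  obtain ⟨hpy, hmin⟩ := hp y
  have hmin : IsMinOn (‖y - ·‖) K (p y) := isMinOn_iff.2 hmin
  have hinf : ⨅ x : K, ‖y - x‖ = ‖y - p y‖ := hmin.iInf_eq hpy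
  exact (norm_eq_iInf_iff_real_inner_le_zero hK hpy).1 hinf.symm z hz

theorem IsMetricProjection.isQuasiNonexpansive (hp : IsMetricProjection K p) (hK : Convex ℝ K) :
    IsQuasiNonexpansive K p := by
  intro y z hz
  rw [dist_comm, dist_eq_norm, dist_eq_norm, ← sq_le_sq₀ (norm_nonneg _) (norm_nonneg _)]
  calc ‖z - p y‖ ^ 2
      ≤ ‖y - p y‖ ^ 2 - 2 * ⟪y - p y, z - p y⟫ + ‖z - p y‖ ^ 2 := by
        linarith [sq_nonneg ‖y - p y‖, hp.real_inner_le_zero hK y hz]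
    _ = ‖y - z‖ ^ 2 := by rw [← norm_sub_sq_real, sub_sub_sub_cancel_right]

end MetricProjection

theorem stmt6_general {ι E : Type*} [NormedAddCommGroup E] [InnerProductSpace ℝ E]
    {X : ι → Set E} (hXconv : ∀ i, Convex ℝ (X i)) (hXne : (⋂ i, X i).Nonempty) {P : ι → E → E}
    (hP : ∀ i, IsMetricProjection (X i) (P i)) {Y : Set E} {r : ℝ}
    (hY : ∀ y ∈ Y, infDist y (⋂ i, X i) ≤ r) {w : E}
    (hw : w ∈ convexHull ℝ (compositionOrbit P Y)) : infDist w (convexHull ℝ Y) ≤ 2 * r :=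
  infDist_le_of_mem_convexHull_compositionOrbit
    (fun i => ((hP i).isQuasiNonexpansive (hXconv i)).anti (Set.iInter_subset X i)) hXne hY hw

/-- For a nonempty finite set `Y`, every point of the convex hull `Δ_Y` of all
images of `Y` under finite compositions of the projections `P_{X i}` satisfies
`dist(w, conv Y) ≤ 2 · max_{z ∈ Y} dist(z, X₀)`, where `X₀ = ⋂ i, X i` is nonempty. -/
theorem stmt6 {E : Type*} [NormedAddCommGroup E] [InnerProductSpace ℝ E] [CompleteSpace E]
    {n : ℕ}
    (X : Fin n → Set E) (hXne : ∀ i, (X i).Nonempty) (hXc : ∀ i, IsClosed (X i))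
    (hXconv : ∀ i, Convex ℝ (X i))
    (X₀ : Set E) (hX₀ : X₀ = ⋂ i, X i) (hX₀ne : X₀.Nonempty)
    (P : Fin n → E → E)
    (hP : ∀ i y, P i y ∈ X i ∧ ∀ z ∈ X i, ‖y - P i y‖ ≤ ‖y - z‖)
    (Y : Finset E) (hY : Y.Nonempty)
    (ΔY : Set E)
    (hΔ : ΔY = convexHull ℝ
      {w : E | ∃ y ∈ Y, ∃ L : List (Fin n), w = L.foldl (fun v i => P i v) y}) :
    ∀ w ∈ ΔY, Metric.infDist w (convexHull ℝ (Y : Set E))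
      ≤ 2 * Y.sup' hY (fun z => Metric.infDist z X₀) := by
  subst hX₀ hΔ
  exact fun w hw => stmt6_general hXconv hX₀ne hP (fun y hy => Y.le_sup' (infDist · _) hy) hw
end

section
/- Let E be a real Hilbert space and K ⊆ E a nonempty closed convex set. Define h : E → ℝ by h(z) = (1/2)·dist(z, K)². Then h is Fréchet differentiable at every z ∈ E, and its derivative at z is the continuous linear map v ↦ ⟨z − P_K(z), v⟩; equivalently, the gradient of h at z equals z − P_K(z). -/
/-
Let `p` be a nearest point of `K` to `z`. Using `p` as a competitor bounds `dist(y, K)²` from above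
by `‖y - p‖² = ‖z - p‖² + 2⟪z - p, y - z⟫ + ‖y - z‖²`. Conversely, `K` lies in the half-space
`⟪z - p, w - p⟫ ≤ 0`, and the squared distance from `y` to that half-space is at least
`‖z - p‖² + 2⟪z - p, y - z⟫`. The two bounds differ by `‖y - z‖²`, which forces differentiability
at `z`; no regularity of the projection near `z` is involved.
-/

open Asymptotics Metric Topology

theorem hasFDerivAt_of_isBigO_norm_sub_pow {𝕜 E F : Type*} [NontriviallyNormedField 𝕜]
    [SeminormedAddCommGroup E] [NormedSpace 𝕜 E] [SeminormedAddCommGroup F] [NormedSpace 𝕜 F]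
    {f : E → F} {f' : E →L[𝕜] F} {x : E} {n : ℕ} (hn : 1 < n)
    (h : (fun y => f y - f x - f' (y - x)) =O[𝓝 x] fun y => ‖y - x‖ ^ n) :
    HasFDerivAt f f' x :=
  .of_isLittleO (h.trans_isLittleO (isLittleO_pow_sub_sub x hn))

theorem le_infDist_sq {X : Type*} [PseudoMetricSpace X] {s : Set X} {x : X} {a : ℝ}
    (hs : s.Nonempty) (h : ∀ y ∈ s, a ≤ dist x y ^ 2) : a ≤ infDist x s ^ 2 :=
  (Real.sqrt_le_left infDist_nonneg).1 <|
    (le_infDist hs).2 fun y hy => (Real.sqrt_le_left dist_nonneg).2 (h y hy)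

theorem infDist_eq_norm_sub_of_forall_norm_sub_le {E : Type*} [SeminormedAddCommGroup E]
    {K : Set E} {z p : E} (hpK : p ∈ K) (hp : ∀ w ∈ K, ‖z - p‖ ≤ ‖z - w‖) :
    infDist z K = ‖z - p‖ := by
  simp only [← dist_eq_norm] at hp ⊢
  exact (infDist_le_dist_of_mem hpK).antisymm ((le_infDist ⟨p, hpK⟩).2 fun w hw => hp w hw)

section Seminormed

variable {E : Type*} [SeminormedAddCommGroup E] [InnerProductSpace ℝ E] {K : Set E} {p : E}

theorem infDist_sq_le_norm_sq_add_two_mul_inner (hpK : p ∈ K) (z y : E) :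
    infDist y K ^ 2 ≤ ‖z - p‖ ^ 2 + 2 * inner ℝ (z - p) (y - z) + ‖y - z‖ ^ 2 :=
  calc
    infDist y K ^ 2 ≤ dist y p ^ 2 := by
      gcongr
      exacts [infDist_nonneg, infDist_le_dist_of_mem hpK]
    _ = ‖(z - p) + (y - z)‖ ^ 2 := by rw [dist_eq_norm, sub_add_sub_cancel']
    _ = ‖z - p‖ ^ 2 + 2 * inner ℝ (z - p) (y - z) + ‖y - z‖ ^ 2 := norm_add_sq_real _ _

theorem norm_sq_add_two_mul_inner_le_of_inner_le_zero {z w : E}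
    (hw : inner ℝ (z - p) (w - p) ≤ 0) (y : E) :
    ‖z - p‖ ^ 2 + 2 * inner ℝ (z - p) (y - z) ≤ ‖y - w‖ ^ 2 := by
  have expansion : ‖y - w‖ ^ 2 = ‖z - p‖ ^ 2
      + 2 * (inner ℝ (z - p) (y - z) - inner ℝ (z - p) (w - p)) + ‖(y - z) - (w - p)‖ ^ 2 := by
    rw [← inner_sub_right, ← norm_add_sq_real]
    congr 2
    abel
  linarith [sq_nonneg ‖(y - z) - (w - p)‖]

theorem norm_sq_add_two_mul_inner_le_infDist_sq {z : E} (hK : K.Nonempty)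
    (hp : ∀ w ∈ K, inner ℝ (z - p) (w - p) ≤ 0) (y : E) :
    ‖z - p‖ ^ 2 + 2 * inner ℝ (z - p) (y - z) ≤ infDist y K ^ 2 :=
  le_infDist_sq hK fun w hw => by
    rw [dist_eq_norm]
    exact norm_sq_add_two_mul_inner_le_of_inner_le_zero (hp w hw) y

end Seminormed

section Normed

variable {E : Type*} [NormedAddCommGroup E] [InnerProductSpace ℝ E] {K : Set E} {z p : E}

theorem real_inner_sub_sub_le_zero_of_forall_norm_sub_le (hK : Convex ℝ K) (hpK : p ∈ K)
    (hp : ∀ w ∈ K, ‖z - p‖ ≤ ‖z - w‖) : ∀ w ∈ K, inner ℝ (z - p) (w - p) ≤ 0 := by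
  rw [← norm_eq_iInf_iff_real_inner_le_zero hK hpK,
    ← infDist_eq_norm_sub_of_forall_norm_sub_le hpK hp, infDist_eq_iInf]
  simp only [dist_eq_norm]

theorem stmt9_general (hK : Convex ℝ K) (hpK : p ∈ K) (hp : ∀ w ∈ K, ‖z - p‖ ≤ ‖z - w‖) :
    HasFDerivAt (fun y => (1 / 2) * infDist y K ^ 2) (innerSL ℝ (z - p)) z := by
  have variational := real_inner_sub_sub_le_zero_of_forall_norm_sub_le hK hpK hp
  refine hasFDerivAt_of_isBigO_norm_sub_pow one_lt_two (.of_bound (1 / 2) (.of_forall fun y => ?_))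
  have lower := norm_sq_add_two_mul_inner_le_infDist_sq ⟨p, hpK⟩ variational y
  have upper := infDist_sq_le_norm_sq_add_two_mul_inner hpK z y
  rw [infDist_eq_norm_sub_of_forall_norm_sub_le hpK hp, innerSL_apply_apply, norm_pow, norm_norm,
    Real.norm_eq_abs, abs_le]
  constructor <;> linarith [sq_nonneg ‖y - z‖]

end Normed

/-- For a nonempty closed convex set `K` in a real Hilbert space `E`, the
function `h(z) = (1/2)·dist(z, K)²` is Fréchet differentiable everywhere with derivative
at `z` the continuous linear map `v ↦ ⟨z − P_K z, v⟩`, i.e. gradient `z − P_K z`. -/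
theorem stmt9 {E : Type*} [NormedAddCommGroup E] [InnerProductSpace ℝ E] [CompleteSpace E]
    (K : Set E) (hKne : K.Nonempty) (hKc : IsClosed K) (hKconv : Convex ℝ K)
    (P : E → E) (hP : ∀ y, P y ∈ K ∧ ∀ z ∈ K, ‖y - P y‖ ≤ ‖y - z‖)
    (h : E → ℝ) (hh : h = fun z => (1 / 2) * (Metric.infDist z K) ^ 2) :
    ∀ z : E, HasFDerivAt h (innerSL ℝ (z - P z)) z := by
  subst hh
  exact fun z => stmt9_general hKconv (hP z).1 (hP z).2
end
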